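/- Let k₀ ⊆ k be fields and (G_n, s_n)_{n ∈ ℕ} a complete system of finite groups. Suppose there exists an increasing tower (F_n)_{n ∈ ℕ} of intermediate fields of k₀((t))/k₀(t), each finite Galois over k₀(t), with isomorphisms G_n ≅ Gal(F_n/k₀(t)) compatible with the s_n and the restriction maps. Then the composita L_n = F_n·k, taken inside k((t)) (using the inclusion k₀((t)) ⊆ k((t))), form an increasing tower of intermediate fields of k((t))/k(t), each finite Galois over k(t), with isomorphisms G_n ≅ Gal(L_n/k(t)) compatible with the s_n and the restriction maps. -/

import Mathlib

attribute [-instance] HahnSeries.powerSeriesAlgebra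

set_option synthInstance.maxHeartbeats 400000
set_option maxHeartbeats 1000000

/-- The canonical copy of the rational function field `k(t)` inside the field `k((t))` of
formal Laurent series: the intermediate field of `k((t))/k` generated by `t`.  (This is the
image of the canonical embedding `k(t) ↪ k((t))`.) -/
noncomputable def ratFuncField (k : Type*) [Field k] : IntermediateField k (LaurentSeries k) :=
  IntermediateField.adjoin k {(HahnSeries.single (1 : ℤ) (1 : k) : LaurentSeries k)}

/-- The canonical inclusion `k₀((t)) ⊆ k((t))` induced by `k₀ ⊆ k`, applying the inclusion
`k₀ → k` to each coefficient. -/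
noncomputable def laurentInclusion (k₀ k : Type*) [Field k₀] [Field k] [Algebra k₀ k] :
    LaurentSeries k₀ →+* LaurentSeries k where
  toFun x := x.map (algebraMap k₀ k)
  map_one' := HahnSeries.map_one (algebraMap k₀ k).toMonoidWithZeroHom
  map_mul' x y := HahnSeries.map_mul (algebraMap k₀ k).toNonUnitalRingHom
  map_zero' := by ext g; simp
  map_add' x y := HahnSeries.map_add (algebraMap k₀ k).toAddMonoidHom

/-!
Every `f ∈ k₀((t)) ∩ k(t)` lies in `k₀(t)`: write `q * f = p` with `p, q ∈ k[t]`, `q ≠ 0`, and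
choose a `k₀`-linear functional `c : k → k₀` that does not kill every coefficient of `q`. Applied
coefficientwise, `c` is `k₀((t))`-linear, so `c(q) * f = c(p)` with `c(p), c(q) ∈ k₀[t]` and
`c(q) ≠ 0`.

Consequently `F ∩ k(t) = k₀(t)` for every finite Galois extension `F` of `k₀(t)` inside `k₀((t))`.
Restriction `Gal(F·k/k(t)) → Gal(F/k₀(t))` is injective because `F` generates `F·k`, and its image
has fixed field `F ∩ k(t) = k₀(t)`, so by the Galois correspondence it is surjective.
-/

section BaseChange

open IntermediateField

variable {K₀ F K L : Type*} [Field K₀] [Field F] [Field K] [Field L]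
  [Algebra K₀ F] [Algebra K₀ K] [Algebra K₀ L] [Algebra F L] [Algebra K L]
  [IsScalarTower K₀ F L] [IsScalarTower K₀ K L]

theorem adjoin_image_algebraMap_eq_top {S : Set F} (hS : adjoin K₀ S = ⊤)
    (hL : adjoin K (Set.range (algebraMap F L)) = ⊤) : adjoin K (algebraMap F L '' S) = ⊤ := by
  have hF : adjoin K₀ S ≤ ((adjoin K (algebraMap F L '' S)).restrictScalars K₀).comap
      (IsScalarTower.toAlgHom K₀ F L) :=
    adjoin_le_iff.2 fun x hx => subset_adjoin K _ ⟨x, hx, rfl⟩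
  rw [eq_top_iff, ← hL, adjoin_le_iff]
  rintro _ ⟨x, rfl⟩
  exact hF (hS ▸ mem_top)

theorem finiteDimensional_of_adjoin_range_eq_top [FiniteDimensional K₀ F]
    (hL : adjoin K (Set.range (algebraMap F L)) = ⊤) : FiniteDimensional K L := by
  obtain ⟨S, hS⟩ := fg_of_noetherian (⊤ : IntermediateField K₀ F)
  have hfin : FiniteDimensional K (adjoin K (algebraMap F L '' S)) :=
    have := (S.finite_toSet.image (algebraMap F L)).to_subtype
    finiteDimensional_adjoin <| by
      rintro _ ⟨x, -, rfl⟩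
      exact ((Algebra.IsIntegral.isIntegral (R := K₀) x).algebraMap).tower_top
  rw [adjoin_image_algebraMap_eq_top hS hL] at hfin
  exact topEquiv.toLinearEquiv.finiteDimensional

theorem isGalois_of_adjoin_range_eq_top [FiniteDimensional K₀ F] [IsGalois K₀ F]
    (hL : adjoin K (Set.range (algebraMap F L)) = ⊤) : IsGalois K L := by
  obtain ⟨p, hp, hpF⟩ := IsGalois.is_separable_splitting_field K₀ F
  rw [isSplittingField_iff_intermediateField] at hpF
  have hroots : (p.map (algebraMap K₀ K)).rootSet L = algebraMap F L '' p.rootSet F := by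
    rw [← IsScalarTower.coe_toAlgHom' K₀ F L, hpF.1.image_rootSet]
    simp only [Set.ext_iff, Polynomial.mem_rootSet', Polynomial.map_map,
      ← IsScalarTower.algebraMap_eq, Polynomial.aeval_map_algebraMap, implies_true]
  have : (p.map (algebraMap K₀ K)).IsSplittingField K L := by
    rw [isSplittingField_iff_intermediateField, hroots, Polynomial.map_map,
      ← IsScalarTower.algebraMap_eq]
    exact ⟨hpF.1.of_algHom (IsScalarTower.toAlgHom K₀ F L),
      adjoin_image_algebraMap_eq_top hpF.2 hL⟩
  exact IsGalois.of_separable_splitting_field (p := p.map (algebraMap K₀ K)) hp.map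

theorem algebraMap_restrictRestrictAlgEquivMapHom [Normal K₀ F] (φ : Gal(L/K)) (x : F) :
    algebraMap F L (restrictRestrictAlgEquivMapHom K₀ F K L φ x) = φ (algebraMap F L x) :=
  AlgEquiv.restrictNormal_commutes _ F x

theorem restrictRestrictAlgEquivMapHom_injective_of_adjoin_range_eq_top [Normal K₀ F]
    (hL : adjoin K (Set.range (algebraMap F L)) = ⊤) :
    Function.Injective (restrictRestrictAlgEquivMapHom K₀ F K L) := by
  intro φ ψ h
  have hφψ : (φ : L →ₐ[K] L).comp (val ⊤) = (ψ : L →ₐ[K] L).comp (val ⊤) :=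
    algHom_ext_of_eq_adjoin K hL.symm <| by
      rintro _ ⟨x, rfl⟩
      change φ (algebraMap F L x) = ψ (algebraMap F L x)
      rw [← algebraMap_restrictRestrictAlgEquivMapHom (K₀ := K₀), h,
        algebraMap_restrictRestrictAlgEquivMapHom]
  exact AlgEquiv.ext fun x => DFunLike.congr_fun hφψ ⟨x, mem_top⟩

theorem restrictRestrictAlgEquivMapHom_surjective_of_forall_mem_range [FiniteDimensional K₀ F]
    [IsGalois K₀ F] [IsGalois K L]
    (hF : ∀ x : F, algebraMap F L x ∈ Set.range (algebraMap K L) →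
      x ∈ Set.range (algebraMap K₀ F)) :
    Function.Surjective (restrictRestrictAlgEquivMapHom K₀ F K L) := by
  have hfixed : fixedField (restrictRestrictAlgEquivMapHom K₀ F K L).range = ⊥ := by
    refine eq_bot_iff.2 fun x hx => mem_bot.2 (hF x ?_)
    refine (InfiniteGalois.mem_range_algebraMap_iff_fixed _).2 fun φ => ?_
    rw [← algebraMap_restrictRestrictAlgEquivMapHom (K₀ := K₀)]
    exact congrArg _ ((mem_fixedField_iff _ _).1 hx _ ⟨φ, rfl⟩)
  rw [← MonoidHom.range_eq_top, ← fixingSubgroup_fixedField (MonoidHom.range _), hfixed,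
    fixingSubgroup_bot]

end BaseChange

theorem hahnSeries_map_mul_map_algebraMap {Γ R S : Type*} [AddCommMonoid Γ] [PartialOrder Γ]
    [IsOrderedCancelAddMonoid Γ] [CommSemiring R] [Semiring S] [Algebra R S] (c : S →ₗ[R] R)
    (x : HahnSeries Γ S) (f : HahnSeries Γ R) :
    (x * f.map (algebraMap R S)).map c = x.map c * f := by
  ext n
  have hf : (f.map (algebraMap R S)).support ⊆ f.support :=
    f.support_map_subset (algebraMap R S : ZeroHom R S)
  have hx : (x.map c).support ⊆ x.support := x.support_map_subset (c : ZeroHom S R)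
  rw [HahnSeries.map_coeff, HahnSeries.coeff_mul_right' f.isPWO_support hf,
    HahnSeries.coeff_mul_left' x.isPWO_support hx, map_sum]
  refine Finset.sum_congr rfl fun ij _ => ?_
  rw [HahnSeries.map_coeff, HahnSeries.map_coeff, ← Algebra.commutes, ← Algebra.smul_def, map_smul,
    smul_eq_mul, mul_comm]

theorem exists_linearMap_hahnSeries_map_ne_zero {Γ : Type*} (R : Type*) {M : Type*}
    [PartialOrder Γ] [CommRing R] [AddCommGroup M] [Module R M] [Module.Projective R M]
    {x : HahnSeries Γ M} (hx : x ≠ 0) : ∃ c : M →ₗ[R] R, x.map c ≠ 0 := by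
  obtain ⟨n, hn⟩ : ∃ n, x.coeff n ≠ 0 := by
    by_contra! h
    exact hx (HahnSeries.ext (funext h))
  obtain ⟨c, hc⟩ := Module.Projective.exists_dual_ne_zero R hn
  exact ⟨c, fun h => hc (congrArg (HahnSeries.coeff · n) h)⟩

section RatFuncField

open Polynomial

/-- The embedding of the polynomial ring `R[t]` into `R((t))`, given by evaluation at `t`. -/
noncomputable def polynomialToLaurent (R : Type*) [CommSemiring R] : R[X] →ₐ[R] LaurentSeries R :=
  aeval (HahnSeries.single (1 : ℤ) (1 : R))

theorem mem_ratFuncField_iff {k : Type*} [Field k] {x : LaurentSeries k} :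
    x ∈ ratFuncField k ↔ ∃ p q : k[X], x = polynomialToLaurent k p / polynomialToLaurent k q :=
  IntermediateField.mem_adjoin_simple_iff k x

theorem polynomialToLaurent_mem_ratFuncField {k : Type*} [Field k] (p : k[X]) :
    polynomialToLaurent k p ∈ ratFuncField k :=
  mem_ratFuncField_iff.2 ⟨p, 1, by rw [map_one, div_one]⟩

theorem polynomialToLaurent_monomial {R : Type*} [CommSemiring R] (n : ℕ) (a : R) :
    polynomialToLaurent R (monomial n a) = HahnSeries.single (n : ℤ) a := by
  simp [polynomialToLaurent, aeval_monomial, HahnSeries.algebraMap_apply]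

variable {k₀ k : Type*} [Field k₀] [Field k]

theorem map_polynomialToLaurent_mem_ratFuncField (c : k →+ k₀) (p : k[X]) :
    (polynomialToLaurent k p).map c ∈ ratFuncField k₀ := by
  induction p using Polynomial.induction_on' with
  | add p q hp hq =>
    rw [map_add, HahnSeries.map_add]
    exact add_mem hp hq
  | monomial n a =>
    have hmap : (HahnSeries.single (n : ℤ) a).map c = HahnSeries.single (n : ℤ) (c a) :=
      HahnSeries.map_single (c : ZeroHom k k₀)
    rw [polynomialToLaurent_monomial, hmap, ← polynomialToLaurent_monomial]
    exact polynomialToLaurent_mem_ratFuncField _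

variable [Algebra k₀ k]

theorem laurentInclusion_polynomialToLaurent (p : k₀[X]) :
    laurentInclusion k₀ k (polynomialToLaurent k₀ p) =
      polynomialToLaurent k (p.map (algebraMap k₀ k)) := by
  induction p using Polynomial.induction_on' with
  | add p q hp hq => simp only [map_add, Polynomial.map_add, hp, hq]
  | monomial n a =>
    rw [Polynomial.map_monomial, polynomialToLaurent_monomial, polynomialToLaurent_monomial]
    exact HahnSeries.map_single (algebraMap k₀ k : ZeroHom k₀ k)

theorem laurentInclusion_mem_ratFuncField_iff {f : LaurentSeries k₀} :
    laurentInclusion k₀ k f ∈ ratFuncField k ↔ f ∈ ratFuncField k₀ := by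
  refine ⟨fun hf => ?_, fun hf => ?_⟩
  · obtain ⟨p, q, hpq⟩ := mem_ratFuncField_iff.1 hf
    by_cases hq : polynomialToLaurent k q = 0
    · rw [hq, div_zero, map_eq_zero] at hpq
      exact hpq ▸ zero_mem _
    obtain ⟨c, hc⟩ := exists_linearMap_hahnSeries_map_ne_zero k₀ hq
    have hmul : (polynomialToLaurent k q).map c * f = (polynomialToLaurent k p).map c := by
      rw [← hahnSeries_map_mul_map_algebraMap]
      exact congrArg (HahnSeries.map · c) (by rw [mul_comm]; exact (eq_div_iff hq).1 hpq)
    rw [eq_div_of_mul_eq hc ((mul_comm _ _).trans hmul)]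
    exact div_mem (map_polynomialToLaurent_mem_ratFuncField c.toAddMonoidHom p)
      (map_polynomialToLaurent_mem_ratFuncField c.toAddMonoidHom q)
  · obtain ⟨p, q, rfl⟩ := mem_ratFuncField_iff.1 hf
    rw [map_div₀, laurentInclusion_polynomialToLaurent, laurentInclusion_polynomialToLaurent]
    exact mem_ratFuncField_iff.2 ⟨_, _, rfl⟩

end RatFuncField

section Compositum

open IntermediateField

/-- The compositum `F·k` inside `k((t))` of an intermediate field `F` of `k₀((t))/k₀(t)`, as the
intermediate field of `k((t))/k(t)` generated by `F`. -/
noncomputable abbrev laurentCompositum {k₀ : Type*} (k : Type*) [Field k₀] [Field k] [Algebra k₀ k]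
    (F : IntermediateField (ratFuncField k₀) (LaurentSeries k₀)) :
    IntermediateField (ratFuncField k) (LaurentSeries k) :=
  adjoin (ratFuncField k) (laurentInclusion k₀ k '' (F : Set (LaurentSeries k₀)))

variable {k₀ k : Type*} [Field k₀] [Field k] [Algebra k₀ k]

theorem laurentCompositum_mono {F F' : IntermediateField (ratFuncField k₀) (LaurentSeries k₀)}
    (h : F ≤ F') : laurentCompositum k F ≤ laurentCompositum k F' :=
  adjoin.mono _ _ _ (Set.image_mono h)

theorem laurentInclusion_mem_laurentCompositum
    {F : IntermediateField (ratFuncField k₀) (LaurentSeries k₀)} {x : LaurentSeries k₀}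
    (hx : x ∈ F) : laurentInclusion k₀ k x ∈ laurentCompositum k F :=
  subset_adjoin _ _ ⟨x, hx, rfl⟩

noncomputable local instance : Algebra (LaurentSeries k₀) (LaurentSeries k) :=
  (laurentInclusion k₀ k).toAlgebra

noncomputable local instance : Algebra (ratFuncField k₀) (ratFuncField k) :=
  (((laurentInclusion k₀ k).comp (ratFuncField k₀).val.toRingHom).codRestrict
    (ratFuncField k).toSubfield fun x => laurentInclusion_mem_ratFuncField_iff.2 x.2).toAlgebra

local instance : IsScalarTower (ratFuncField k₀) (ratFuncField k) (LaurentSeries k) :=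
  .of_algebraMap_eq fun _ => rfl

variable (k) (F : IntermediateField (ratFuncField k₀) (LaurentSeries k₀))

noncomputable local instance : Algebra F (laurentCompositum k F) :=
  (((laurentInclusion k₀ k).comp F.val.toRingHom).codRestrict (laurentCompositum k F).toSubfield
    fun x => laurentInclusion_mem_laurentCompositum x.2).toAlgebra

local instance : IsScalarTower (ratFuncField k₀) F (laurentCompositum k F) :=
  .of_algebraMap_eq fun _ => rfl

theorem adjoin_range_algebraMap_laurentCompositum :
    adjoin (ratFuncField k) (Set.range (algebraMap F (laurentCompositum k F))) = ⊤ := by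
  apply lift_injective
  rw [lift_adjoin, lift_top, ← Set.range_comp]
  exact congrArg _ (Set.image_eq_range (laurentInclusion k₀ k) (F : Set (LaurentSeries k₀))).symm

theorem finiteDimensional_laurentCompositum [FiniteDimensional (ratFuncField k₀) F] :
    FiniteDimensional (ratFuncField k) (laurentCompositum k F) :=
  finiteDimensional_of_adjoin_range_eq_top (K₀ := ratFuncField k₀)
    (adjoin_range_algebraMap_laurentCompositum k F)

variable [FiniteDimensional (ratFuncField k₀) F] [IsGalois (ratFuncField k₀) F]

theorem isGalois_laurentCompositum : IsGalois (ratFuncField k) (laurentCompositum k F) :=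
  isGalois_of_adjoin_range_eq_top (K₀ := ratFuncField k₀)
    (adjoin_range_algebraMap_laurentCompositum k F)

theorem restrictRestrictAlgEquivMapHom_laurentCompositum_bijective :
    Function.Bijective (restrictRestrictAlgEquivMapHom (ratFuncField k₀) F (ratFuncField k)
      (laurentCompositum k F)) := by
  have := isGalois_laurentCompositum k F
  refine ⟨restrictRestrictAlgEquivMapHom_injective_of_adjoin_range_eq_top
    (adjoin_range_algebraMap_laurentCompositum k F),
    restrictRestrictAlgEquivMapHom_surjective_of_forall_mem_range ?_⟩
  rintro x ⟨y, hy⟩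
  have hxy : laurentInclusion k₀ k x = y := (congrArg Subtype.val hy).symm
  have hx : (x : LaurentSeries k₀) ∈ ratFuncField k₀ :=
    laurentInclusion_mem_ratFuncField_iff.1 (hxy ▸ y.2)
  exact ⟨⟨x, hx⟩, rfl⟩

/-- The isomorphism `Gal(F/k₀(t)) ≃* Gal(F·k/k(t))` inverse to restriction. -/
noncomputable def laurentCompositumGalEquiv :
    Gal(F/ratFuncField k₀) ≃* Gal(laurentCompositum k F/ratFuncField k) :=
  (MulEquiv.ofBijective _ (restrictRestrictAlgEquivMapHom_laurentCompositum_bijective k F)).symm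

theorem laurentCompositumGalEquiv_laurentInclusion (σ : Gal(F/ratFuncField k₀)) (x : F) :
    (laurentCompositumGalEquiv k F σ
      ⟨laurentInclusion k₀ k x, laurentInclusion_mem_laurentCompositum x.2⟩ : LaurentSeries k) =
      laurentInclusion k₀ k (σ x) := by
  have hσ : restrictRestrictAlgEquivMapHom (ratFuncField k₀) F (ratFuncField k)
      (laurentCompositum k F) (laurentCompositumGalEquiv k F σ) = σ :=
    (MulEquiv.ofBijective _
      (restrictRestrictAlgEquivMapHom_laurentCompositum_bijective k F)).apply_symm_apply σ
  have h := algebraMap_restrictRestrictAlgEquivMapHom (K₀ := ratFuncField k₀)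
    (laurentCompositumGalEquiv k F σ) x
  rw [hσ] at h
  exact (congrArg Subtype.val h).symm

variable {F}

theorem laurentCompositumGalEquiv_eq_of_le
    {F' : IntermediateField (ratFuncField k₀) (LaurentSeries k₀)}
    [FiniteDimensional (ratFuncField k₀) F'] [IsGalois (ratFuncField k₀) F'] (hle : F ≤ F')
    {σ : Gal(F/ratFuncField k₀)} {σ' : Gal(F'/ratFuncField k₀)}
    (h : ∀ x (hx : x ∈ F), (σ ⟨x, hx⟩ : LaurentSeries k₀) = σ' ⟨x, hle hx⟩)
    (x : LaurentSeries k) (hx : x ∈ laurentCompositum k F) :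
    (laurentCompositumGalEquiv k F σ ⟨x, hx⟩ : LaurentSeries k) =
      laurentCompositumGalEquiv k F' σ' ⟨x, laurentCompositum_mono hle hx⟩ := by
  have hσ : (val _).comp (laurentCompositumGalEquiv k F σ).toAlgHom =
      ((val _).comp (laurentCompositumGalEquiv k F' σ').toAlgHom).comp
        (inclusion (laurentCompositum_mono hle)) := by
    refine algHom_ext_of_eq_adjoin _ rfl ?_
    rintro _ ⟨y, hy, rfl⟩
    refine (laurentCompositumGalEquiv_laurentInclusion k F σ ⟨y, hy⟩).trans ?_
    rw [h y hy]
    exact (laurentCompositumGalEquiv_laurentInclusion k F' σ' ⟨y, hle hy⟩).symm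
  exact DFunLike.congr_fun hσ ⟨x, hx⟩

end Compositum

/-- Let `k₀ ⊆ k` be fields and `(Gₙ, sₙ)` a complete system of finite
groups.  Suppose there is an increasing tower `(Fₙ)` of intermediate fields of
`k₀((t))/k₀(t)`, each finite Galois over `k₀(t)`, with isomorphisms `Gₙ ≃* Gal(Fₙ/k₀(t))`
compatible with the `sₙ` and the restriction maps.  Then the composita `Lₙ = Fₙ·k`, taken
inside `k((t))` (via `k₀((t)) ⊆ k((t))`), form an increasing tower of intermediate fields of
`k((t))/k(t)`, each finite Galois over `k(t)`, with isomorphisms `Gₙ ≃* Gal(Lₙ/k(t))`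
compatible with the `sₙ` and the restriction maps. -/
theorem stmt10 (k₀ k : Type*) [Field k₀] [Field k] [Algebra k₀ k]
    (G : ℕ → Type*) [∀ n, Group (G n)] [∀ n, Finite (G n)]
    (s : ∀ n, G (n + 1) →* G n) (hs : ∀ n, Function.Surjective (s n))
    (F : ℕ → IntermediateField (ratFuncField k₀) (LaurentSeries k₀))
    (hFmono : Monotone F)
    (hFgal : ∀ n, IsGalois (ratFuncField k₀) (F n))
    (hFfin : ∀ n, FiniteDimensional (ratFuncField k₀) (F n))
    (εF : ∀ n, G n ≃* ((F n) ≃ₐ[ratFuncField k₀] (F n)))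
    (hεF : ∀ (n : ℕ) (g : G (n + 1)) (x : LaurentSeries k₀) (hx : x ∈ F n),
      ((εF n (s n g) ⟨x, hx⟩ : F n) : LaurentSeries k₀)
        = ((εF (n + 1) g ⟨x, hFmono (Nat.le_succ n) hx⟩ : F (n + 1)) : LaurentSeries k₀)) :
    ∃ hmono : Monotone (fun n => IntermediateField.adjoin (ratFuncField k)
        (laurentInclusion k₀ k '' (F n : Set (LaurentSeries k₀))) :
          ℕ → IntermediateField (ratFuncField k) (LaurentSeries k)),
      (∀ n, IsGalois (ratFuncField k) (IntermediateField.adjoin (ratFuncField k)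
        (laurentInclusion k₀ k '' (F n : Set (LaurentSeries k₀))))) ∧
      (∀ n, FiniteDimensional (ratFuncField k) (IntermediateField.adjoin (ratFuncField k)
        (laurentInclusion k₀ k '' (F n : Set (LaurentSeries k₀))))) ∧
      ∃ ε : ∀ n, G n ≃* ((IntermediateField.adjoin (ratFuncField k)
          (laurentInclusion k₀ k '' (F n : Set (LaurentSeries k₀))))
            ≃ₐ[ratFuncField k]
          (IntermediateField.adjoin (ratFuncField k)
            (laurentInclusion k₀ k '' (F n : Set (LaurentSeries k₀))))),
        ∀ (n : ℕ) (g : G (n + 1)) (x : LaurentSeries k)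
          (hx : x ∈ IntermediateField.adjoin (ratFuncField k)
            (laurentInclusion k₀ k '' (F n : Set (LaurentSeries k₀)))),
          ((ε n (s n g) ⟨x, hx⟩ :
              IntermediateField.adjoin (ratFuncField k)
                (laurentInclusion k₀ k '' (F n : Set (LaurentSeries k₀)))) : LaurentSeries k)
            = ((ε (n + 1) g ⟨x, hmono (Nat.le_succ n) hx⟩ :
              IntermediateField.adjoin (ratFuncField k)
                (laurentInclusion k₀ k '' (F (n + 1) : Set (LaurentSeries k₀)))) :
                  LaurentSeries k) :=
  ⟨fun _ _ h => laurentCompositum_mono (hFmono h),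
    fun n => isGalois_laurentCompositum k (F n),
    fun n => finiteDimensional_laurentCompositum k (F n),
    fun n => (εF n).trans (laurentCompositumGalEquiv k (F n)),
    fun n g => laurentCompositumGalEquiv_eq_of_le k (hFmono n.le_succ) (hεF n g)⟩
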